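/- arXiv:2012.11872 — 3 statements merged into one kernel-verified Lean document; each statement's English description precedes it below -/
import Mathlib

section
/- Let (α;β) and (α';β') be bicompositions (pairs of weak compositions of equal length with no zero column). Then every bicomposition occurring in the quasi-shuffle product (α;β)*(α';β'), taken over the monoid ℕ×ℕ with componentwise addition and viewing a bicomposition as the list of its columns, again has no zero column, and M_{(α;β)}(X,Y) · M_{(α';β')}(X,Y) = M_{(α;β)*(α';β')}(X,Y) in ℚ[[X,Y]], where M_{(·)}(X,Y) is extended ℚ-linearly to linear combinations of bicompositions. -/
open Finset

/-- quasi-shuffle product on the free ℚ-module on lists over an additive commutative monoid -/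
noncomputable def qsh {A : Type} [AddCommMonoid A] : List A → List A → (List A →₀ ℚ)
  | [], b => Finsupp.single b 1
  | a :: a', [] => Finsupp.single (a :: a') 1
  | a :: a', b :: b' =>
      (qsh a' (b :: b')).mapDomain (a :: ·) +
      (qsh (a :: a') b').mapDomain (b :: ·) +
      (qsh a' b').mapDomain ((a + b) :: ·)
termination_by a b => a.length + b.length

/-- the bimonomial quasisymmetric function M_{(α;β)}(X,Y) of a bicomposition (list of columns):
its coefficient at a monomial ν is the number of strictly increasing tuples I with
x_I^α·y_I^β = ν (`Set.ncard` takes the value 0 on infinite sets). -/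
noncomputable def biM (c : List (ℕ × ℕ)) : MvPowerSeries (ℕ+ ⊕ ℕ+) ℚ :=
  fun ν => (Set.ncard {I : Fin c.length → ℕ+ | StrictMono I ∧
    (∑ j, (Finsupp.single (Sum.inl (I j)) (c.get j).1 +
           Finsupp.single (Sum.inr (I j)) (c.get j).2)) = ν} : ℚ)

/-!
Each coefficient of `biM` involves only finitely many indices, because a nonzero column placed at
an index `i` forces one of the variables `x_i`, `y_i` to occur; so `biM` may be truncated to a
finite set of indices. If `m` is smaller than every element of `s`, then splitting off the index
`m` gives `M_{a::c}(s ∪ {m}) = m^a * M_c(s) + M_{a::c}(s)`. Multiplying two such identities produces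
the three terms of the quasi-shuffle recursion, and the product formula for truncations follows by
induction on `s`.
-/

section StrictMonoTuples

variable {ι : Type*} [LinearOrder ι]

/-- The strictly increasing `k`-tuples with entries in the finite set `s`: the index set of the
sum defining a truncated quasisymmetric function. -/
def strictMonoTuples (s : Finset ι) (k : ℕ) : Finset (Fin k → ι) :=
  {I ∈ Fintype.piFinset fun _ => s | StrictMono I}

theorem mem_strictMonoTuples {s : Finset ι} {k : ℕ} {I : Fin k → ι} :
    I ∈ strictMonoTuples s k ↔ (∀ j, I j ∈ s) ∧ StrictMono I := by
  simp [strictMonoTuples]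

theorem strictMonoTuples_zero (s : Finset ι) : strictMonoTuples s 0 = {Fin.elim0} := by
  ext I
  simp [mem_strictMonoTuples, Subsingleton.strictMono, Subsingleton.elim I Fin.elim0]

theorem strictMonoTuples_empty_succ (k : ℕ) : strictMonoTuples (∅ : Finset ι) (k + 1) = ∅ := by
  simp [strictMonoTuples]

theorem cons_mem_strictMonoTuples_insert {m i : ι} {s : Finset ι} (hm : ∀ x ∈ s, m < x) {k : ℕ}
    {I : Fin k → ι} :
    (Fin.cons i I : Fin (k + 1) → ι) ∈ strictMonoTuples (insert m s) (k + 1) ↔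
      (i = m ∧ I ∈ strictMonoTuples s k) ∨
        (Fin.cons i I : Fin (k + 1) → ι) ∈ strictMonoTuples s (k + 1) := by
  simp only [mem_strictMonoTuples, Fin.strictMono_cons, Fin.forall_fin_succ, Fin.cons_zero,
    Fin.cons_succ, mem_insert]
  grind

theorem sum_strictMonoTuples_insert {M : Type*} [AddCommMonoid M] {m : ι} {s : Finset ι}
    (hm : ∀ x ∈ s, m < x) (k : ℕ) (f : (Fin (k + 1) → ι) → M) :
    ∑ I ∈ strictMonoTuples (insert m s) (k + 1), f I =
      ∑ I ∈ strictMonoTuples s k, f (Fin.cons m I) + ∑ I ∈ strictMonoTuples s (k + 1), f I := by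
  have hdisj : Disjoint ((strictMonoTuples s k).image (Fin.cons (α := fun _ => ι) m))
      (strictMonoTuples s (k + 1)) := by
    rw [disjoint_left]
    rintro _ hI hmem
    obtain ⟨I, -, rfl⟩ := mem_image.1 hI
    exact (hm _ ((mem_strictMonoTuples.1 hmem).1 0)).ne rfl
  have hunion : strictMonoTuples (insert m s) (k + 1) =
      (strictMonoTuples s k).image (Fin.cons (α := fun _ => ι) m) ∪
        strictMonoTuples s (k + 1) := by
    ext I
    induction I using Fin.consCases with
    | _ i I =>
      rw [cons_mem_strictMonoTuples_insert hm, mem_union, mem_image]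
      simp only [Fin.cons_inj]
      grind
  rw [hunion, sum_union hdisj, sum_image (Fin.cons_right_injective (α := fun _ => ι) m).injOn]

end StrictMonoTuples

section TruncatedQuasisymm

variable {ι A R : Type*} [LinearOrder ι] [CommSemiring R]

/-- The quasisymmetric function of the list `c`, truncated to the finite set `s` of indices: the sum
of the products `w i₁ c₁ ⋯ w iₖ cₖ` over all `i₁ < ⋯ < iₖ` in `s`, where the weight `w i a`
stands for the power `x_i^a`. -/
def truncatedQuasisymm (w : ι → A → R) (s : Finset ι) (c : List A) : R :=
  ∑ I ∈ strictMonoTuples s c.length, ∏ j, w (I j) (c.get j)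

theorem truncatedQuasisymm_nil (w : ι → A → R) (s : Finset ι) :
    truncatedQuasisymm w s [] = 1 := by
  simp [truncatedQuasisymm, strictMonoTuples_zero]

theorem truncatedQuasisymm_empty_cons (w : ι → A → R) (a : A) (c : List A) :
    truncatedQuasisymm w ∅ (a :: c) = 0 := by
  simp [truncatedQuasisymm, strictMonoTuples_empty_succ]

theorem truncatedQuasisymm_insert_cons (w : ι → A → R) {m : ι} {s : Finset ι}
    (hm : ∀ x ∈ s, m < x) (a : A) (c : List A) :
    truncatedQuasisymm w (insert m s) (a :: c) =
      w m a * truncatedQuasisymm w s c + truncatedQuasisymm w s (a :: c) := by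
  unfold truncatedQuasisymm
  refine (sum_strictMonoTuples_insert hm c.length _).trans ?_
  simp [Fin.prod_univ_succ, mul_sum]

variable [Algebra ℚ R]

theorem linearCombination_truncatedQuasisymm_empty_mapDomain_cons (w : ι → A → R) (a : A)
    (f : List A →₀ ℚ) :
    Finsupp.linearCombination ℚ (truncatedQuasisymm w ∅) (f.mapDomain (a :: ·)) = 0 := by
  have hzero : truncatedQuasisymm w ∅ ∘ (a :: ·) = 0 :=
    funext fun c => truncatedQuasisymm_empty_cons w a c
  rw [Finsupp.linearCombination_mapDomain, hzero, Finsupp.linearCombination_zero_apply]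

theorem linearCombination_truncatedQuasisymm_insert_mapDomain_cons (w : ι → A → R) {m : ι}
    {s : Finset ι} (hm : ∀ x ∈ s, m < x) (a : A) (f : List A →₀ ℚ) :
    Finsupp.linearCombination ℚ (truncatedQuasisymm w (insert m s)) (f.mapDomain (a :: ·)) =
      w m a * Finsupp.linearCombination ℚ (truncatedQuasisymm w s) f +
        Finsupp.linearCombination ℚ (truncatedQuasisymm w s) (f.mapDomain (a :: ·)) := by
  rw [Finsupp.linearCombination_mapDomain, Finsupp.linearCombination_mapDomain]
  simp only [Finsupp.linearCombination_apply, Function.comp_apply,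
    truncatedQuasisymm_insert_cons w hm, smul_add, Finsupp.sum_add, Finsupp.mul_sum,
    mul_smul_comm]

end TruncatedQuasisymm

section QuasiShuffle

theorem forall_mem_of_mem_support_mapDomain_cons {A : Type*} {P : A → Prop} {a : A} (ha : P a)
    {f : List A →₀ ℚ} (hf : ∀ d ∈ f.support, ∀ p ∈ d, P p) :
    ∀ d ∈ (f.mapDomain (a :: ·)).support, ∀ p ∈ d, P p := by
  classical
  intro d hd
  obtain ⟨e, he, rfl⟩ := mem_image.1 (Finsupp.mapDomain_support hd)
  exact List.forall_mem_cons.2 ⟨ha, hf e he⟩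

variable {A : Type} [AddCommMonoid A]

theorem qsh_nil_left (c : List A) : qsh [] c = Finsupp.single c 1 := by
  rw [qsh]

theorem qsh_nil_right (c : List A) : qsh c [] = Finsupp.single c 1 := by
  cases c <;> rw [qsh]

theorem forall_mem_of_mem_support_qsh {P : A → Prop} (hP : ∀ a b, P a → P b → P (a + b))
    (c c' : List A) (hc : ∀ p ∈ c, P p) (hc' : ∀ p ∈ c', P p) :
    ∀ d ∈ (qsh c c').support, ∀ p ∈ d, P p := by
  classical
  induction c, c' using qsh.induct with
  | case1 b =>
    intro d hd
    rw [qsh_nil_left] at hd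
    rwa [mem_singleton.1 (Finsupp.support_single_subset hd)]
  | case2 a a' =>
    intro d hd
    rw [qsh_nil_right] at hd
    rwa [mem_singleton.1 (Finsupp.support_single_subset hd)]
  | case3 a a' b b' ih_left ih_right ih_both =>
    obtain ⟨ha, ha'⟩ := List.forall_mem_cons.1 hc
    obtain ⟨hb, hb'⟩ := List.forall_mem_cons.1 hc'
    intro d hd
    rw [qsh] at hd
    rcases mem_union.1 (Finsupp.support_add hd) with hd | hd
    · rcases mem_union.1 (Finsupp.support_add hd) with hd | hd
      · exact forall_mem_of_mem_support_mapDomain_cons ha (ih_left ha' hc') d hd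
      · exact forall_mem_of_mem_support_mapDomain_cons hb (ih_right hc hb') d hd
    · exact forall_mem_of_mem_support_mapDomain_cons (hP a b ha hb) (ih_both ha' hb') d hd

theorem truncatedQuasisymm_mul {ι R : Type*} [LinearOrder ι] [CommRing R] [Algebra ℚ R]
    {w : ι → A → R} (hw : ∀ i a b, w i (a + b) = w i a * w i b) (s : Finset ι) (c c' : List A) :
    truncatedQuasisymm w s c * truncatedQuasisymm w s c' =
      Finsupp.linearCombination ℚ (truncatedQuasisymm w s) (qsh c c') := by
  induction s using Finset.induction_on_min generalizing c c' with
  | empty =>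
    rcases c with _ | ⟨a, c⟩
    · simp [qsh_nil_left, truncatedQuasisymm_nil]
    rcases c' with _ | ⟨b, c'⟩
    · simp [qsh_nil_right, truncatedQuasisymm_nil]
    simp only [qsh, map_add, truncatedQuasisymm_empty_cons,
      linearCombination_truncatedQuasisymm_empty_mapDomain_cons, mul_zero, add_zero]
  | insert m s hm ih =>
    rcases c with _ | ⟨a, c⟩
    · simp [qsh_nil_left, truncatedQuasisymm_nil]
    rcases c' with _ | ⟨b, c'⟩
    · simp [qsh_nil_right, truncatedQuasisymm_nil]
    have ih_cons := ih (a :: c) (b :: c')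
    simp only [qsh, map_add] at ih_cons
    simp only [qsh, map_add, linearCombination_truncatedQuasisymm_insert_mapDomain_cons w hm,
      truncatedQuasisymm_insert_cons w hm, hw, ← ih]
    linear_combination ih_cons

end QuasiShuffle

section BimonomialCoefficients

variable {ι : Type*}

/-- The exponent vector of the monomial `x_i^{a.1} y_i^{a.2}`, with `Sum.inl i` and `Sum.inr i`
indexing the variables `x_i` and `y_i`. -/
noncomputable def columnExponent (i : ι) (a : ℕ × ℕ) : ι ⊕ ι →₀ ℕ :=
  Finsupp.single (Sum.inl i) a.1 + Finsupp.single (Sum.inr i) a.2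

theorem columnExponent_add (i : ι) (a b : ℕ × ℕ) :
    columnExponent i (a + b) = columnExponent i a + columnExponent i b := by
  simp only [columnExponent, Prod.fst_add, Prod.snd_add, Finsupp.single_add]
  abel

theorem mem_of_columnExponent_le {i : ι} {a : ℕ × ℕ} (ha : a ≠ (0, 0)) {ν : ι ⊕ ι →₀ ℕ}
    (hle : columnExponent i a ≤ ν) {s : Finset ι} (hs : ν.support ⊆ s.disjSum s) : i ∈ s := by
  have hx : a.1 ≤ ν (Sum.inl i) := by simpa [columnExponent] using hle (Sum.inl i)
  have hy : a.2 ≤ ν (Sum.inr i) := by simpa [columnExponent] using hle (Sum.inr i)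
  have hν : ν (Sum.inl i) ≠ 0 ∨ ν (Sum.inr i) ≠ 0 := by
    by_contra! h
    exact ha (Prod.ext (by lia) (by lia))
  rcases hν with h | h
  · exact inl_mem_disjSum.1 (hs (Finsupp.mem_support_iff.2 h))
  · exact inr_mem_disjSum.1 (hs (Finsupp.mem_support_iff.2 h))

/-- The monomial `x_i^{a.1} y_i^{a.2}`, the weight which makes `truncatedQuasisymm` a truncation of
`biM`. -/
noncomputable def columnMonomial (R : Type*) [CommSemiring R] (i : ι) (a : ℕ × ℕ) :
    MvPowerSeries (ι ⊕ ι) R :=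
  MvPowerSeries.monomial (columnExponent i a) 1

theorem columnMonomial_add {R : Type*} [CommSemiring R] (i : ι) (a b : ℕ × ℕ) :
    columnMonomial R i (a + b) = columnMonomial R i a * columnMonomial R i b := by
  simp [columnMonomial, columnExponent_add, MvPowerSeries.monomial_mul_monomial]

theorem coeff_truncatedQuasisymm_columnMonomial {R : Type*} [CommSemiring R] [LinearOrder ι]
    (s : Finset ι) (c : List (ℕ × ℕ)) (ν : ι ⊕ ι →₀ ℕ) :
    MvPowerSeries.coeff ν (truncatedQuasisymm (columnMonomial R) s c) =
      #{I ∈ strictMonoTuples s c.length | ∑ j, columnExponent (I j) (c.get j) = ν} := by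
  simp [truncatedQuasisymm, columnMonomial, MvPowerSeries.prod_monomial,
    MvPowerSeries.coeff_monomial, eq_comm]

theorem coeff_biM_eq_coeff_truncatedQuasisymm {c : List (ℕ × ℕ)} (hc : ∀ p ∈ c, p ≠ (0, 0))
    {s : Finset ℕ+} {ν : ℕ+ ⊕ ℕ+ →₀ ℕ} (hs : ν.support ⊆ s.disjSum s) :
    MvPowerSeries.coeff ν (biM c) =
      MvPowerSeries.coeff ν (truncatedQuasisymm (columnMonomial ℚ) s c) := by
  rw [coeff_truncatedQuasisymm_columnMonomial, ← Set.ncard_coe_finset, MvPowerSeries.coeff_apply,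
    biM]
  congr 2
  ext I
  simp only [coe_filter, Set.mem_ofPred_eq, mem_strictMonoTuples]
  refine ⟨fun ⟨hI, hν⟩ => ⟨⟨fun j => ?_, hI⟩, hν⟩, fun ⟨⟨_, hI⟩, hν⟩ => ⟨hI, hν⟩⟩
  have hle : columnExponent (I j) (c.get j) ≤ ν :=
    hν ▸ single_le_sum (f := fun j => columnExponent (I j) (c.get j)) (fun _ _ => zero_le)
      (mem_univ j)
  exact mem_of_columnExponent_le (hc _ (c.get_mem j)) hle hs

theorem coeff_biM_mul_biM {c c' : List (ℕ × ℕ)} (hc : ∀ p ∈ c, p ≠ (0, 0))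
    (hc' : ∀ p ∈ c', p ≠ (0, 0)) {s : Finset ℕ+} {ν : ℕ+ ⊕ ℕ+ →₀ ℕ}
    (hs : ν.support ⊆ s.disjSum s) :
    MvPowerSeries.coeff ν (biM c * biM c') = MvPowerSeries.coeff ν
      (truncatedQuasisymm (columnMonomial ℚ) s c *
        truncatedQuasisymm (columnMonomial ℚ) s c') := by
  simp only [MvPowerSeries.coeff_mul]
  refine sum_congr rfl fun μ hμ => ?_
  have hsum : μ.1 + μ.2 = ν := mem_antidiagonal.1 hμ
  rw [coeff_biM_eq_coeff_truncatedQuasisymm hc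
      ((Finsupp.support_mono (hsum ▸ le_self_add)).trans hs),
    coeff_biM_eq_coeff_truncatedQuasisymm hc'
      ((Finsupp.support_mono (hsum ▸ le_add_self)).trans hs)]

theorem exists_subset_disjSum_self (t : Finset (ι ⊕ ι)) : ∃ s : Finset ι, t ⊆ s.disjSum s := by
  classical
  exact ⟨t.toLeft ∪ t.toRight, subset_disjSum.2 ⟨subset_union_left, subset_union_right⟩⟩

end BimonomialCoefficients

/-- For bicompositions (α;β), (α';β') (lists of columns in ℕ×ℕ with no zero
column), every bicomposition occurring in the quasi-shuffle product (α;β)*(α';β') over the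
monoid ℕ×ℕ again has no zero column, and
M_{(α;β)}(X,Y) · M_{(α';β')}(X,Y) = M_{(α;β)*(α';β')}(X,Y) in ℚ[[X,Y]], where M is extended
ℚ-linearly. -/
theorem stmt1 (c c' : List (ℕ × ℕ))
    (hc : ∀ p ∈ c, p ≠ (0, 0)) (hc' : ∀ p ∈ c', p ≠ (0, 0)) :
    (∀ d ∈ (qsh c c').support, ∀ p ∈ d, p ≠ (0, 0)) ∧
    biM c * biM c' = (qsh c c').sum fun d q => q • biM d := by
  have hadd : ∀ p q : ℕ × ℕ, p ≠ (0, 0) → q ≠ (0, 0) → p + q ≠ (0, 0) :=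
    fun _ _ hp _ hpq => hp (add_eq_zero.1 hpq).1
  have hsupp := forall_mem_of_mem_support_qsh hadd c c' hc hc'
  refine ⟨hsupp, ?_⟩
  ext ν
  obtain ⟨s, hs⟩ := exists_subset_disjSum_self ν.support
  rw [coeff_biM_mul_biM hc hc' hs, truncatedQuasisymm_mul columnMonomial_add,
    Finsupp.linearCombination_apply, Finsupp.sum, Finsupp.sum, map_sum, map_sum]
  refine sum_congr rfl fun d hd => ?_
  rw [map_smul, map_smul, coeff_biM_eq_coeff_truncatedQuasisymm (hsupp d hd) hs]
end

section
/- Let (α;β) be a directed weak bicomposition of length k and let j with 1≤j≤k be such that α_{j+1}=⋯=α_k=0. Then for every real t≥0 and every z∈ℂ with Re z<0, one has the identity of formal power series φ(α;β)(t,z) = φ((α_1,…,α_{j−1},α_j);(β_1,…,β_{j−1},β_j+β_{j+1}+⋯+β_k))(t,z) · φ((0,…,0);(β_{j+1},…,β_k))(0,z), where the second factor has length k−j and equals 1 when j=k. -/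
open Finset

/-- the regularization φ(α;β)(t,z) of a directed weak bicomposition (list of columns):
its coefficient at a monomial μ is the sum of exp(((i_1+t)β_1+⋯+(i_k+t)β_k)z) over all
strictly increasing tuples I = (i_1 < ⋯ < i_k) with x_I^α = μ. -/
noncomputable def phiPS (c : List (ℕ × ℕ)) (t : ℝ) (z : ℂ) : MvPowerSeries ℕ+ ℂ :=
  fun μ => ∑' I : {I : Fin c.length → ℕ+ // StrictMono I ∧
      (∑ j, Finsupp.single (I j) (c.get j).1) = μ},
    Complex.exp ((∑ j, (((I.1 j : ℕ) : ℂ) + (t : ℂ)) * ((c.get j).2 : ℂ)) * z)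

/-!
Since `α` vanishes on the last `m` columns, the monomial of a strictly increasing tuple `K` of
length `n + 1 + m` only sees its first `n + 1` entries `I`. The remaining entries exceed
`i = I (Fin.last n)`, so they can be written `i + J` with `J` an arbitrary strictly increasing
tuple of length `m`. As `(i + J l + t) β_l = (i + t) β_l + J l * β_l`, the shift by `i` moves all
the `β_l` to the last column of `I`, and the sum over `K` factors into sums over `I` and over `J`.
The rearrangement is legitimate by absolute convergence: as soon as the last `β` is positive, the
weighted sum of an increasing tuple dominates a fixed multiple of its plain sum, and an increasing
tuple is determined by its range, so the series is dominated by the finite products of the terms of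
a geometric series.
-/

theorem summable_strictMono_prod {ι κ : Type*} [Fintype ι] [LinearOrder ι] [PartialOrder κ]
    {f : κ → ℝ} (hf₀ : ∀ k, 0 ≤ f k) (hf : Summable f) :
    Summable fun I : {I : ι → κ // StrictMono I} => ∏ i, f (I.1 i) := by
  let range (I : {I : ι → κ // StrictMono I}) : Finset κ := univ.map ⟨I.1, I.2.injective⟩
  have range_injective : Function.Injective range := fun I J hIJ => by
    have hset : Set.range I.1 = Set.range J.1 := by
      simpa [range] using congrArg (fun s : Finset κ => (s : Set κ)) hIJ
    exact Subtype.ext ((I.2.range_inj J.2).1 hset)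
  simpa [range, Function.comp_def] using
    (summable_finsetProd_of_summable_nonneg hf₀ hf).comp_injective range_injective

section Tuples

variable {ι : Type*} [Fintype ι]

/-- The monomial `∏ i, x_{I i} ^ α i` of a tuple of indices, encoded by its exponents. -/
noncomputable def tupleMonomial (α : ι → ℕ) (I : ι → ℕ+) : ℕ+ →₀ ℕ :=
  ∑ i, Finsupp.single (I i) (α i)

/-- The weight `∑ i, (I i + t) * β i` whose multiple by `z` is exponentiated in `φ(α;β)(t,z)`. -/
noncomputable def tupleWeight (β : ι → ℕ) (t : ℝ) (I : ι → ℕ+) : ℂ :=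
  ∑ i, (((I i : ℕ) : ℂ) + (t : ℂ)) * (β i : ℂ)

/-- The series `φ(α;β)(t,z)`, for `α` and `β` given as two families rather than as a list of
columns, so that the tuples can be indexed by `Fin n` for any expression `n`. -/
noncomputable def tuplePhi [Preorder ι] (α β : ι → ℕ) (t : ℝ) (z : ℂ) : MvPowerSeries ℕ+ ℂ :=
  fun μ => ∑' I : {I : ι → ℕ+ // StrictMono I ∧ tupleMonomial α I = μ},
    Complex.exp (tupleWeight β t I.1 * z)

theorem tupleWeight_eq_ofReal (β : ι → ℕ) (t : ℝ) (I : ι → ℕ+) :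
    tupleWeight β t I = ((∑ i, ((I i : ℕ) : ℝ) * β i + t * ∑ i, (β i : ℝ) : ℝ) : ℂ) := by
  simp only [tupleWeight, add_mul, sum_add_distrib, mul_sum]
  push_cast
  rfl

theorem tupleWeight_add (β β' : ι → ℕ) (t : ℝ) (I : ι → ℕ+) :
    tupleWeight (β + β') t I = tupleWeight β t I + tupleWeight β' t I := by
  simp [tupleWeight, mul_add, sum_add_distrib]

theorem tupleWeight_single [DecidableEq ι] (i : ι) (b : ℕ) (t : ℝ) (I : ι → ℕ+) :
    tupleWeight (Pi.single i b) t I = (((I i : ℕ) : ℂ) + (t : ℂ)) * (b : ℂ) := by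
  simp [tupleWeight, Pi.single_apply]

theorem tupleWeight_const_add (β : ι → ℕ) (t : ℝ) (k : ℕ+) (J : ι → ℕ+) :
    tupleWeight β t (fun i => k + J i) =
      (((k : ℕ) : ℂ) + (t : ℂ)) * ((∑ i, β i : ℕ) : ℂ) + tupleWeight β 0 J := by
  simp only [tupleWeight, PNat.add_coe, Nat.cast_add, Nat.cast_sum, mul_sum, ← sum_add_distrib,
    Complex.ofReal_zero]
  exact sum_congr rfl fun i _ => by ring

-- On a finite chain the hypothesis on `β` says that `β` is positive at the top element, if any.
theorem sum_le_card_mul_sum_mul [Preorder ι] {β : ι → ℕ} (hβ : ∀ i, ∃ k ≥ i, 0 < β k)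
    {I : ι → ℕ+} (hI : Monotone I) :
    ∑ i, (I i : ℕ) ≤ Fintype.card ι * ∑ k, (I k : ℕ) * β k := by
  refine sum_le_card_nsmul univ _ _ fun i _ => ?_
  obtain ⟨k, hik, hk⟩ := hβ i
  calc (I i : ℕ) ≤ I k := hI hik
    _ ≤ I k * β k := Nat.le_mul_of_pos_right _ hk
    _ ≤ ∑ k, (I k : ℕ) * β k :=
      single_le_sum (f := fun k => (I k : ℕ) * β k) (fun _ _ => Nat.zero_le _) (mem_univ k)

theorem norm_exp_tupleWeight_le [Preorder ι] {β : ι → ℕ} (hβ : ∀ i, ∃ k ≥ i, 0 < β k)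
    (t : ℝ) {z : ℂ} (hz : z.re ≤ 0) {I : ι → ℕ+} (hI : Monotone I) :
    ‖Complex.exp (tupleWeight β t I * z)‖ ≤
      Real.exp (t * (∑ i, (β i : ℝ)) * z.re) *
        ∏ i, Real.exp (z.re / Fintype.card ι) ^ (I i : ℕ) := by
  have hsum : ∑ i, ((I i : ℕ) : ℝ) ≤ Fintype.card ι * ∑ k, ((I k : ℕ) : ℝ) * β k := by
    exact_mod_cast sum_le_card_mul_sum_mul hβ hI
  have hdiv : (∑ k, ((I k : ℕ) : ℝ) * β k) * z.re ≤
      (∑ i, ((I i : ℕ) : ℝ)) * (z.re / Fintype.card ι) := by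
    rcases isEmpty_or_nonempty ι with _ | _
    · simp
    · have hcard : (0 : ℝ) < Fintype.card ι := by exact_mod_cast Fintype.card_pos
      rw [← mul_div_assoc, le_div_iff₀ hcard]
      linarith [mul_le_mul_of_nonpos_right hsum hz]
  rw [prod_pow_eq_pow_sum, ← Real.exp_nat_mul, ← Real.exp_add, Complex.norm_exp,
    tupleWeight_eq_ofReal, Complex.re_ofReal_mul, Real.exp_le_exp]
  push_cast
  linarith

theorem summable_norm_exp_tupleWeight [LinearOrder ι] {β : ι → ℕ}
    (hβ : ∀ i, ∃ k ≥ i, 0 < β k) (t : ℝ) {z : ℂ} (hz : z.re < 0) :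
    Summable fun I : {I : ι → ℕ+ // StrictMono I} =>
      ‖Complex.exp (tupleWeight β t I.1 * z)‖ := by
  rcases isEmpty_or_nonempty ι with _ | _
  · exact .of_finite
  have hr : Real.exp (z.re / Fintype.card ι) < 1 :=
    Real.exp_lt_one_iff.2 (div_neg_of_neg_of_pos hz (by exact_mod_cast Fintype.card_pos))
  have hgeom : Summable fun k : ℕ+ => Real.exp (z.re / Fintype.card ι) ^ (k : ℕ) :=
    (summable_geometric_of_lt_one (Real.exp_pos _).le hr).comp_injective PNat.coe_injective
  exact .of_nonneg_of_le (fun _ => norm_nonneg _)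
    (fun I => norm_exp_tupleWeight_le hβ t hz.le I.2.monotone)
    ((summable_strictMono_prod (fun _ => by positivity) hgeom).mul_left _)

theorem summable_norm_tuplePhi [LinearOrder ι] (α : ι → ℕ) {β : ι → ℕ}
    (hβ : ∀ i, ∃ k ≥ i, 0 < β k) (t : ℝ) {z : ℂ} (hz : z.re < 0) (μ : ℕ+ →₀ ℕ) :
    Summable fun I : {I : ι → ℕ+ // StrictMono I ∧ tupleMonomial α I = μ} =>
      ‖Complex.exp (tupleWeight β t I.1 * z)‖ := by
  let forget (I : {I : ι → ℕ+ // StrictMono I ∧ tupleMonomial α I = μ}) :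
      {I : ι → ℕ+ // StrictMono I} := ⟨I.1, I.2.1⟩
  have forget_injective : Function.Injective forget := fun _ _ h =>
    Subtype.ext (congrArg (fun I => I.1) h)
  simpa only [forget, Function.comp_def] using
    (summable_norm_exp_tupleWeight hβ t hz).comp_injective forget_injective

theorem tuplePhi_zero_left [Preorder ι] (β : ι → ℕ) (t : ℝ) (z : ℂ) :
    tuplePhi 0 β t z = MvPowerSeries.C (tuplePhi 0 β t z 0) := by
  classical
  ext μ
  rw [MvPowerSeries.coeff_C]
  split_ifs with hμ
  · rw [hμ, MvPowerSeries.coeff_apply]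
  · have : IsEmpty {I : ι → ℕ+ // StrictMono I ∧ tupleMonomial 0 I = μ} :=
      ⟨fun I => hμ (by simp [← I.2.2, tupleMonomial])⟩
    exact tsum_empty

end Tuples

section AppendShift

variable {n m : ℕ}

theorem tupleMonomial_append (α : Fin n → ℕ) (α' : Fin m → ℕ) (I : Fin n → ℕ+)
    (J : Fin m → ℕ+) :
    tupleMonomial (Fin.append α α') (Fin.append I J) = tupleMonomial α I + tupleMonomial α' J := by
  simp [tupleMonomial, Fin.sum_univ_add]

theorem tupleWeight_append (β : Fin n → ℕ) (β' : Fin m → ℕ) (t : ℝ) (I : Fin n → ℕ+)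
    (J : Fin m → ℕ+) :
    tupleWeight (Fin.append β β') t (Fin.append I J) =
      tupleWeight β t I + tupleWeight β' t J := by
  simp [tupleWeight, Fin.sum_univ_add]

/-- The tuple `(I, i + J)`, where `i` is the last entry of `I`. For increasing tuples this is the
decomposition that separates the two factors of the series. -/
def appendShift (I : Fin (n + 1) → ℕ+) (J : Fin m → ℕ+) : Fin (n + 1 + m) → ℕ+ :=
  Fin.append I fun i => I (Fin.last n) + J i

theorem appendShift_inj {I I' : Fin (n + 1) → ℕ+} {J J' : Fin m → ℕ+} :
    appendShift I J = appendShift I' J' ↔ I = I' ∧ J = J' := by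
  refine ⟨fun h => ?_, by rintro ⟨rfl, rfl⟩; rfl⟩
  obtain rfl : I = I' := funext fun i => by
    simpa [appendShift] using congrFun h (Fin.castAdd m i)
  exact ⟨rfl, funext fun i => by simpa [appendShift] using congrFun h (Fin.natAdd (n + 1) i)⟩

theorem strictMono_appendShift_iff {I : Fin (n + 1) → ℕ+} {J : Fin m → ℕ+} :
    StrictMono (appendShift I J) ↔ StrictMono I ∧ StrictMono J := by
  constructor
  · intro h
    refine ⟨fun x y hxy => ?_, fun x y hxy => ?_⟩
    · simpa [appendShift] using h (Fin.strictMono_castAdd m hxy)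
    · simpa [appendShift] using h (Fin.strictMono_natAdd (n + 1) hxy)
  · rintro ⟨hI, hJ⟩ x y hxy
    induction x using Fin.addCases with
    | left x =>
      induction y using Fin.addCases with
      | left y => simpa [appendShift] using hI hxy
      | right y =>
        simpa [appendShift] using
          (hI.monotone (Fin.le_last x)).trans_lt (PNat.lt_add_right _ (J y))
    | right x =>
      induction y using Fin.addCases with
      | left y =>
        simp only [Fin.lt_def, Fin.val_natAdd, Fin.val_castAdd] at hxy
        omega
      | right y => simpa [appendShift] using hJ ((Fin.natAdd_lt_natAdd_iff (n + 1)).1 hxy)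

theorem exists_appendShift_eq {K : Fin (n + 1 + m) → ℕ+} (hK : StrictMono K) :
    ∃ I J, appendShift I J = K := by
  have hlt (i : Fin m) : K (Fin.castAdd m (Fin.last n)) < K (Fin.natAdd (n + 1) i) :=
    hK (by simp only [Fin.lt_def, Fin.val_castAdd, Fin.val_last, Fin.val_natAdd]; omega)
  refine ⟨fun i => K (Fin.castAdd m i),
    fun i => K (Fin.natAdd (n + 1) i) - K (Fin.castAdd m (Fin.last n)), ?_⟩
  simp only [appendShift, PNat.add_sub_of_lt (hlt _), Fin.append_castAdd_natAdd]

theorem tupleMonomial_appendShift (α : Fin (n + 1) → ℕ) (I : Fin (n + 1) → ℕ+)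
    (J : Fin m → ℕ+) :
    tupleMonomial (Fin.append α 0) (appendShift I J) = tupleMonomial α I := by
  rw [appendShift, tupleMonomial_append]
  simp [tupleMonomial]

theorem tupleWeight_appendShift (β : Fin (n + 1) → ℕ) (β' : Fin m → ℕ) (t : ℝ)
    (I : Fin (n + 1) → ℕ+) (J : Fin m → ℕ+) :
    tupleWeight (Fin.append β β') t (appendShift I J) =
      tupleWeight (β + Pi.single (Fin.last n) (∑ i, β' i)) t I + tupleWeight β' 0 J := by
  rw [appendShift, tupleWeight_append, tupleWeight_const_add, tupleWeight_add,
    tupleWeight_single, add_assoc]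

theorem bijective_appendShift (α : Fin (n + 1) → ℕ) (μ : ℕ+ →₀ ℕ) :
    Function.Bijective
      (fun x => ⟨appendShift x.1.1 x.2.1, strictMono_appendShift_iff.2 ⟨x.1.2.1, x.2.2.1⟩,
        (tupleMonomial_appendShift α _ _).trans x.1.2.2⟩ :
      {I : Fin (n + 1) → ℕ+ // StrictMono I ∧ tupleMonomial α I = μ} ×
        {J : Fin m → ℕ+ // StrictMono J ∧ tupleMonomial 0 J = 0} →
      {K : Fin (n + 1 + m) → ℕ+ // StrictMono K ∧ tupleMonomial (Fin.append α 0) K = μ}) := by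
  constructor
  · rintro ⟨I, J⟩ ⟨I', J'⟩ h
    obtain ⟨hI, hJ⟩ := appendShift_inj.1 (congrArg Subtype.val h)
    exact Prod.ext (Subtype.ext hI) (Subtype.ext hJ)
  · rintro ⟨K, hK, hμ⟩
    obtain ⟨I, J, rfl⟩ := exists_appendShift_eq hK
    obtain ⟨hI, hJ⟩ := strictMono_appendShift_iff.1 hK
    rw [tupleMonomial_appendShift] at hμ
    exact ⟨⟨⟨I, hI, hμ⟩, ⟨J, hJ, by simp [tupleMonomial]⟩⟩, rfl⟩

theorem exists_ge_pos_right {β : Fin n → ℕ} {β' : Fin m → ℕ}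
    (h : ∀ i, ∃ k ≥ i, 0 < Fin.append β β' k) (i : Fin m) : ∃ k ≥ i, 0 < β' k := by
  obtain ⟨k, hik, hk⟩ := h (Fin.natAdd n i)
  induction k using Fin.addCases with
  | left k =>
    simp only [ge_iff_le, Fin.le_def, Fin.val_natAdd, Fin.val_castAdd] at hik
    omega
  | right k => exact ⟨k, (Fin.natAdd_le_natAdd_iff n).1 hik, by simpa using hk⟩

theorem exists_ge_pos_add_single_last {β : Fin (n + 1) → ℕ} {β' : Fin m → ℕ}
    (h : ∀ i, ∃ k ≥ i, 0 < Fin.append β β' k) (i : Fin (n + 1)) :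
    ∃ k ≥ i, 0 < (β + Pi.single (Fin.last n) (∑ l, β' l) : Fin (n + 1) → ℕ) k := by
  refine ⟨Fin.last n, Fin.le_last i, ?_⟩
  rw [Pi.add_apply, Pi.single_eq_same]
  obtain ⟨k, hlast, hk⟩ := h (Fin.castAdd m (Fin.last n))
  induction k using Fin.addCases with
  | left k =>
    obtain rfl : k = Fin.last n := Fin.last_le_iff.1 hlast
    exact Nat.add_pos_left (by simpa using hk) _
  | right k =>
    rw [Fin.append_right] at hk
    exact Nat.add_pos_right _ (hk.trans_le (single_le_sum (by simp) (mem_univ k)))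

theorem tuplePhi_append_zero (α β : Fin (n + 1) → ℕ) {β' : Fin m → ℕ}
    (hβ : ∀ i, ∃ k ≥ i, 0 < Fin.append β β' k) (t : ℝ) {z : ℂ} (hz : z.re < 0) :
    tuplePhi (Fin.append α 0) (Fin.append β β') t z =
      tuplePhi α (β + Pi.single (Fin.last n) (∑ i, β' i)) t z * tuplePhi 0 β' 0 z := by
  ext μ
  rw [tuplePhi_zero_left, MvPowerSeries.coeff_mul_C]
  simp only [MvPowerSeries.coeff_apply, tuplePhi]
  rw [tsum_mul_tsum_of_summable_norm
      (summable_norm_tuplePhi α (exists_ge_pos_add_single_last hβ) t hz μ)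
      (summable_norm_tuplePhi 0 (exists_ge_pos_right hβ) 0 hz 0),
    ← (Equiv.ofBijective _ (bijective_appendShift α μ)).tsum_eq]
  refine tsum_congr fun x => ?_
  rw [Equiv.ofBijective_apply, tupleWeight_appendShift, add_mul, Complex.exp_add]

end AppendShift

theorem tuplePhi_comp_cast {m n : ℕ} (h : m = n) (α β : Fin n → ℕ) (t : ℝ) (z : ℂ) :
    tuplePhi (α ∘ Fin.cast h) (β ∘ Fin.cast h) t z = tuplePhi α β t z := by
  subst h
  rfl

theorem phiPS_eq_tuplePhi (c : List (ℕ × ℕ)) (t : ℝ) (z : ℂ) :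
    phiPS c t z = tuplePhi (fun i => (c.get i).1) (fun i => (c.get i).2) t z :=
  rfl

theorem phiPS_ofFn {n : ℕ} (α β : Fin n → ℕ) (t : ℝ) (z : ℂ) :
    phiPS (List.ofFn fun i => (α i, β i)) t z = tuplePhi α β t z := by
  rw [phiPS_eq_tuplePhi, ← tuplePhi_comp_cast (List.length_ofFn (f := fun i => (α i, β i)))]
  simp only [List.get_ofFn, Function.comp_def]

theorem exists_ge_pos_of_getLast? {n : ℕ} {α β : Fin n → ℕ}
    (h : ∀ p ∈ (List.ofFn fun i => (α i, β i)).getLast?, 0 < p.2) (i : Fin n) :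
    ∃ k ≥ i, 0 < β k := by
  cases n with
  | zero => exact i.elim0
  | succ n =>
    refine ⟨Fin.last n, Fin.le_last i, h (α (Fin.last n), β (Fin.last n)) ?_⟩
    rw [Option.mem_def, List.ofFn_succ_last, List.getLast?_concat]

theorem ofFn_prodMk_append {n m : ℕ} (α β : Fin n → ℕ) (α' β' : Fin m → ℕ) :
    (List.ofFn fun i => (Fin.append α α' i, Fin.append β β' i)) =
      (List.ofFn fun i => (α i, β i)) ++ List.ofFn fun i => (α' i, β' i) := by
  rw [← List.ofFn_fin_append]
  congr 1
  funext i
  induction i using Fin.addCases <;> simp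

theorem exists_ofFn_add_single_last_eq_concat (l : List (ℕ × ℕ)) (p : ℕ × ℕ) :
    ∃ (n : ℕ) (α β : Fin (n + 1) → ℕ), ∀ s : ℕ,
      (List.ofFn fun i => (α i, (β + Pi.single (Fin.last n) s : Fin (n + 1) → ℕ) i)) =
        l ++ [(p.1, p.2 + s)] := by
  refine ⟨l.length, Fin.snoc (fun i => (l.get i).1) p.1, Fin.snoc (fun i => (l.get i).2) p.2,
    fun s => ?_⟩
  rw [List.ofFn_succ_last]
  simp

theorem exists_ofFn_zero_prodMk_eq {r : List (ℕ × ℕ)} (hr : ∀ q ∈ r, q.1 = 0) :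
    ∃ (m : ℕ) (β : Fin m → ℕ), (List.ofFn fun i => ((0 : Fin m → ℕ) i, β i)) = r := by
  refine ⟨r.length, fun i => (r.get i).2, ?_⟩
  conv_rhs => rw [← List.ofFn_get r]
  exact congrArg List.ofFn (funext fun i => Prod.ext (hr _ (List.get_mem r i)).symm rfl)

theorem phiPS_append_cons (l : List (ℕ × ℕ)) (p : ℕ × ℕ) {r : List (ℕ × ℕ)}
    (hlast : ∀ q ∈ (l ++ p :: r).getLast?, 0 < q.2) (hr : ∀ q ∈ r, q.1 = 0)
    (t : ℝ) {z : ℂ} (hz : z.re < 0) :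
    phiPS (l ++ p :: r) t z =
      phiPS (l ++ [(p.1, p.2 + (r.map Prod.snd).sum)]) t z * phiPS r 0 z := by
  obtain ⟨n, α, β, merged⟩ := exists_ofFn_add_single_last_eq_concat l p
  obtain ⟨m, β', rfl⟩ := exists_ofFn_zero_prodMk_eq hr
  have left : (List.ofFn fun i => (α i, β i)) = l ++ [p] := by simpa using! merged 0
  have whole : (List.ofFn fun i => (Fin.append α 0 i, Fin.append β β' i)) =
      l ++ p :: List.ofFn fun i => ((0 : Fin m → ℕ) i, β' i) := by
    rw [ofFn_prodMk_append, left, List.append_assoc, List.singleton_append]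
  have sum_snd : ((List.ofFn fun i => ((0 : Fin m → ℕ) i, β' i)).map Prod.snd).sum =
      ∑ i, β' i := by
    rw [List.map_ofFn, List.sum_ofFn]
    rfl
  rw [← whole] at hlast ⊢
  rw [sum_snd, ← merged, phiPS_ofFn, phiPS_ofFn, phiPS_ofFn]
  exact tuplePhi_append_zero α β (exists_ge_pos_of_getLast? hlast) t hz

theorem stmt5_general (c : List (ℕ × ℕ)) (hlast : ∀ p ∈ c.getLast?, 0 < p.2)
    (j : ℕ) (hj1 : 1 ≤ j) (hjk : j ≤ c.length)
    (hzero : ∀ i : Fin c.length, j ≤ (i : ℕ) → (c.get i).1 = 0)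
    (t : ℝ) (z : ℂ) (hz : z.re < 0) :
    phiPS c t z =
      phiPS (c.take (j - 1) ++
          [((c.get ⟨j - 1, Nat.sub_one_lt_of_le hj1 hjk⟩).1,
            ((c.drop (j - 1)).map Prod.snd).sum)]) t z *
      phiPS ((c.drop j).map fun p => (0, p.2)) 0 z := by
  obtain ⟨i, rfl⟩ : ∃ i, j = i + 1 := Nat.exists_eq_add_of_le' hj1
  have hdrop : c.drop i = c.get ⟨i, hjk⟩ :: c.drop (i + 1) := List.drop_eq_getElem_cons hjk
  have hsplit : c.take i ++ c.get ⟨i, hjk⟩ :: c.drop (i + 1) = c := by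
    rw [← hdrop, List.take_append_drop]
  have hr : ∀ q ∈ c.drop (i + 1), q.1 = 0 := fun q hq => by
    obtain ⟨k, hk, rfl⟩ := List.mem_drop_iff_getElem.1 hq
    exact hzero ⟨i + 1 + k, by omega⟩ (Nat.le_add_right _ _)
  have hmap : ((c.drop (i + 1)).map fun p => (0, p.2)) = (c.drop (i + 1)).map id :=
    List.map_congr_left fun q hq => Prod.ext (hr q hq).symm rfl
  have key := phiPS_append_cons (c.take i) (c.get ⟨i, hjk⟩) (hsplit.symm ▸ hlast) hr t hz
  rw [hsplit] at key
  simpa only [Nat.add_sub_cancel, hmap, List.map_id, hdrop, List.map_cons, List.sum_cons] using key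

/-- Let (α;β) be a directed weak bicomposition (given as its list of columns c,
with all second entries positive) of length k, and let 1 ≤ j ≤ k be such that
α_{j+1} = ⋯ = α_k = 0. Then for every real t ≥ 0 and z ∈ ℂ with Re z < 0,
φ(α;β)(t,z) = φ((α_1,…,α_j); (β_1,…,β_{j-1}, β_j+β_{j+1}+⋯+β_k))(t,z)
                · φ((0,…,0); (β_{j+1},…,β_k))(0,z). -/
theorem stmt5 (c : List (ℕ × ℕ)) (hc : ∀ p ∈ c, 0 < p.2)
    (j : ℕ) (hj1 : 1 ≤ j) (hjk : j ≤ c.length)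
    (hzero : ∀ i : Fin c.length, j ≤ (i : ℕ) → (c.get i).1 = 0)
    (t : ℝ) (ht : 0 ≤ t) (z : ℂ) (hz : z.re < 0) :
    phiPS c t z =
      phiPS (c.take (j - 1) ++
          [((c.get ⟨j - 1, by omega⟩).1, ((c.drop (j - 1)).map Prod.snd).sum)]) t z *
      phiPS ((c.drop j).map fun p => (0, p.2)) 0 z :=
  stmt5_general c (fun p hp => hc p (List.mem_of_getLast? hp)) j hj1 hjk hzero t z hz
end

section
/- The ℚ-linear span in ℚ[[X]] of the Stirling left weak quasisymmetric functions M̂_{(α;β)}, taken over all upper-left weak bicompositions (α;β), equals the ℚ-linear span of the monomial left weak quasisymmetric functions M_α, taken over all left weak compositions α. -/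
open Finset

/-- a left weak composition: empty or last entry positive -/
def LeftWeak (l : List ℕ) : Prop := ∀ a : ℕ, l.getLast? = some a → 0 < a

/-- an upper-left weak bicomposition (a list of columns whose first-row list is left weak) -/
def UpperLeftWeak (c : List (ℕ × ℕ)) : Prop := ∀ p : ℕ × ℕ, c.getLast? = some p → 0 < p.1

/-- the monomial (left weak) quasisymmetric function M_α of a weak composition α, as a formal
power series in ℚ[[X]]: its coefficient at a monomial μ is the number of strictly increasing
tuples I with x_I^α = μ (`Set.ncard` takes the value 0 on infinite sets). -/
noncomputable def Mqs (α : List ℕ) : MvPowerSeries ℕ+ ℚ :=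
  fun μ => (Set.ncard {I : Fin α.length → ℕ+ | StrictMono I ∧
    (∑ j, Finsupp.single (I j) (α.get j)) = μ} : ℚ)

/-- the Stirling left weak quasisymmetric function M̂_{(α;β)} of a bicomposition (list of
columns): its coefficient at a monomial μ is the (finite, for upper-left weak bicompositions)
sum of I^β over all strictly increasing tuples I with x_I^α = μ. -/
noncomputable def stirM (c : List (ℕ × ℕ)) : MvPowerSeries ℕ+ ℚ :=
  fun μ => ∑ᶠ I ∈ {I : Fin c.length → ℕ+ | StrictMono I ∧
      (∑ j, Finsupp.single (I j) (c.get j).1) = μ},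
    ∏ j, (((I j : ℕ) : ℚ) ^ (c.get j).2)

/-!
In a strictly increasing tuple `I` of positive integers, `I j` is the number of positive integers `t
≤ I j`. Each such `t` lies in exactly one block `I (l - 1) < t ≤ I l` with `l ≤ j` (for `l = 0`, the
block `t ≤ I 0`): either `t = I l`, or `t` can be inserted into `I` just before position `l`, which
leaves the monomial `x_I^α` unchanged when `t` is given exponent `0`. Hence raising `β_j` by one
gives `M̂_{(α; β + e_j)} = ∑_{l ≤ j} (M̂_{(α;β)} + M̂_{(α';β')})`, where `(α';β')` is `(α;β)` with a
zero column inserted before position `l`. Inserting before an existing position keeps the last entry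
of `α`, so induction on `∑ β` expresses every `M̂_{(α;β)}` as a sum of functions `M̂_{(α;0)} = M_α`.
-/

theorem prod_pow_add_single {ι M : Type*} [Fintype ι] [DecidableEq ι] [CommMonoid M] (x : ι → M)
    (b : ι → ℕ) (j : ι) :
    ∏ i, x i ^ (b + Pi.single j 1 : ι → ℕ) i = x j * ∏ i, x i ^ b i := by
  have hsingle : ∏ i, x i ^ (Pi.single j 1 : ι → ℕ) i = x j := by
    rw [Fintype.prod_eq_single j fun i hi => by rw [Pi.single_eq_of_ne hi, pow_zero],
      Pi.single_eq_same, pow_one]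
  simp only [Pi.add_apply, pow_add, prod_mul_distrib, hsingle, mul_comm]

section Gaps

variable {σ : Type*} [LinearOrder σ] [LocallyFiniteOrderBot σ] {k : ℕ} {I : Fin k → σ}

/-- The elements that can be inserted into a strictly increasing tuple `I` immediately before
position `l` so that it remains strictly increasing. -/
def gapBefore (I : Fin k → σ) (l : Fin k) : Finset σ :=
  {t ∈ Iio (I l) | ∀ i < l, I i < t}

theorem mem_gapBefore {l : Fin k} {t : σ} :
    t ∈ gapBefore I l ↔ t < I l ∧ ∀ i < l, I i < t := by
  simp only [gapBefore, mem_filter, mem_Iio]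

theorem strictMono_insertNth_castSucc_iff {l : Fin k} {t : σ} :
    StrictMono (l.castSucc.insertNth t I : Fin (k + 1) → σ) ↔
      StrictMono I ∧ t ∈ gapBefore I l := by
  rw [mem_gapBefore]
  constructor
  · intro h
    refine ⟨?_, ?_, fun i hi => ?_⟩
    · simpa only [Fin.insertNth_comp_succAbove] using h.comp (Fin.strictMono_succAbove l.castSucc)
    · have hlt := h l.castSucc_lt_succ
      rwa [← Fin.succAbove_castSucc_self, Fin.insertNth_apply_same,
        Fin.insertNth_apply_succAbove] at hlt
    · have hlt := h (Fin.succAbove_lt_iff_castSucc_lt _ _ |>.2 (Fin.castSucc_lt_castSucc_iff.2 hi))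
      rwa [Fin.insertNth_apply_same, Fin.insertNth_apply_succAbove] at hlt
  · rintro ⟨hI, hlt, hgt⟩ x y hxy
    rcases Fin.eq_self_or_eq_succAbove l.castSucc x with rfl | ⟨i, rfl⟩ <;>
      rcases Fin.eq_self_or_eq_succAbove l.castSucc y with rfl | ⟨j, rfl⟩
    · exact absurd hxy (lt_irrefl _)
    · rw [Fin.insertNth_apply_same, Fin.insertNth_apply_succAbove]
      rw [Fin.lt_succAbove_iff_le_castSucc, Fin.castSucc_le_castSucc_iff] at hxy
      exact hlt.trans_le (hI.monotone hxy)
    · rw [Fin.insertNth_apply_same, Fin.insertNth_apply_succAbove]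
      rw [Fin.succAbove_lt_iff_castSucc_lt, Fin.castSucc_lt_castSucc_iff] at hxy
      exact hgt i hxy
    · rw [Fin.insertNth_apply_succAbove, Fin.insertNth_apply_succAbove]
      exact hI ((Fin.strictMono_succAbove _).lt_iff_lt.1 hxy)

theorem mem_insert_gapBefore (hI : StrictMono I) {l : Fin k} {t : σ} :
    t ∈ insert (I l) (gapBefore I l) ↔ t ≤ I l ∧ ∀ i < l, I i < t := by
  have hself : t = I l → ∀ i < l, I i < t := fun ht i hi => ht ▸ hI hi
  rw [mem_insert, mem_gapBefore, le_iff_eq_or_lt, or_and_right, and_iff_left_of_imp hself]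

theorem Iic_eq_biUnion_insert_gapBefore (hI : StrictMono I) (j : Fin k) :
    Iic (I j) = (Iic j).biUnion fun l => insert (I l) (gapBefore I l) := by
  ext t
  simp only [mem_Iic, mem_biUnion, mem_insert_gapBefore hI]
  constructor
  · intro ht
    obtain ⟨l, htl, hmin⟩ := WellFounded.has_min wellFounded_lt {i | t ≤ I i} ⟨j, ht⟩
    exact ⟨l, not_lt.1 (hmin j ht), htl, fun i hi => not_le.1 fun hti => hmin i hti hi⟩
  · rintro ⟨l, hlj, htl, -⟩
    exact htl.trans (hI.monotone hlj)

theorem pairwise_disjoint_insert_gapBefore (hI : StrictMono I) :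
    Pairwise (Function.onFun Disjoint fun l => insert (I l) (gapBefore I l)) := by
  refine (pairwise_disjoint_on _).2 fun l m hlm => disjoint_left.2 fun t htl htm => ?_
  rw [mem_insert_gapBefore hI] at htl htm
  exact (htm.2 l hlm).not_ge htl.1

theorem card_Iic_eq_sum_card_gapBefore_add_one (hI : StrictMono I) (j : Fin k) :
    #(Iic (I j)) = ∑ l ∈ Iic j, (#(gapBefore I l) + 1) := by
  rw [Iic_eq_biUnion_insert_gapBefore hI,
    card_biUnion fun l _ m _ hlm => pairwise_disjoint_insert_gapBefore hI hlm]
  refine sum_congr rfl fun l _ => card_insert_of_notMem fun h => ?_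
  exact lt_irrefl _ (mem_gapBefore.1 h).1

end Gaps

/-- Left weak compositions of length `k` as tuples: a nonempty tuple ends in a positive entry
exactly when every position is weakly followed by a positive entry. This form avoids naming the last
position and adapts directly to inserting an entry before an existing position. -/
def LeftWeakTuple {k : ℕ} (a : Fin k → ℕ) : Prop :=
  ∀ i, ∃ j, i ≤ j ∧ 0 < a j

theorem LeftWeakTuple.insertNth_castSucc {k : ℕ} {a : Fin k → ℕ} (ha : LeftWeakTuple a) (n : ℕ)
    (l : Fin k) : LeftWeakTuple (l.castSucc.insertNth n a : Fin (k + 1) → ℕ) := by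
  intro x
  suffices ∃ j, x ≤ l.castSucc.succAbove j ∧ 0 < a j by
    obtain ⟨j, hxj, hj⟩ := this
    exact ⟨_, hxj, by rwa [Fin.insertNth_apply_succAbove]⟩
  rcases Fin.eq_self_or_eq_succAbove l.castSucc x with rfl | ⟨i, rfl⟩
  · obtain ⟨j, hlj, hj⟩ := ha l
    exact ⟨j, ((Fin.lt_succAbove_iff_le_castSucc _ _).2 hlj).le, hj⟩
  · obtain ⟨j, hij, hj⟩ := ha i
    exact ⟨j, (Fin.strictMono_succAbove _).monotone hij, hj⟩

section MonomialTuples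

variable {σ : Type*} [LinearOrder σ] {k : ℕ} {a : Fin k → ℕ} {μ : σ →₀ ℕ}

/-- The strictly increasing tuples `I` with `x_I ^ a = μ`; the coefficients at `μ` of the (Stirling)
quasisymmetric functions with upper row `a` are sums over them. -/
def monomialTuples (a : Fin k → ℕ) (μ : σ →₀ ℕ) : Set (Fin k → σ) :=
  {I | StrictMono I ∧ ∑ j, Finsupp.single (I j) (a j) = μ}

variable [LocallyFiniteOrderBot σ]

theorem LeftWeakTuple.finite_monomialTuples (ha : LeftWeakTuple a) (μ : σ →₀ ℕ) :
    (monomialTuples a μ).Finite := by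
  have hfin : (⋃ s ∈ μ.support, Set.Iic s).Finite :=
    μ.support.finite_toSet.biUnion fun s _ => Set.finite_Iic s
  refine (Set.Finite.pi' fun _ : Fin k => hfin).subset ?_
  rintro I ⟨hI, rfl⟩ i
  obtain ⟨j, hij, hj⟩ := ha i
  refine Set.mem_biUnion (x := I j) ?_ (hI.monotone hij)
  rw [mem_coe, Finsupp.mem_support_iff, Finsupp.finsetSum_apply, ← Nat.pos_iff_ne_zero]
  refine sum_pos' (fun _ _ => Nat.zero_le _) ⟨j, mem_univ j, ?_⟩
  rwa [Finsupp.single_eq_same]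

theorem insertNth_castSucc_mem_monomialTuples_iff {l : Fin k} {t : σ} {I : Fin k → σ} :
    (l.castSucc.insertNth t I : Fin (k + 1) → σ) ∈
        monomialTuples (l.castSucc.insertNth 0 a : Fin (k + 1) → ℕ) μ ↔
      I ∈ monomialTuples a μ ∧ t ∈ gapBefore I l := by
  simp only [monomialTuples, Set.mem_ofPred_eq, strictMono_insertNth_castSucc_iff,
    Fin.sum_univ_succAbove _ l.castSucc, Fin.insertNth_apply_same, Fin.insertNth_apply_succAbove,
    Finsupp.single_zero, zero_add]
  exact and_right_comm

theorem LeftWeakTuple.sum_monomialTuples_insertNth_castSucc {M : Type*} [AddCommMonoid M]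
    (ha : LeftWeakTuple a) (l : Fin k) (w : (Fin k → σ) → M) :
    ∑ J ∈ ((ha.insertNth_castSucc 0 l).finite_monomialTuples μ).toFinset,
        w (l.castSucc.removeNth J) =
      ∑ I ∈ (ha.finite_monomialTuples μ).toFinset, #(gapBefore I l) • w I := by
  simp_rw [← sum_const]
  rw [sum_sigma']
  refine sum_nbij' (fun J => ⟨l.castSucc.removeNth J, J l.castSucc⟩)
    (fun p => l.castSucc.insertNth p.2 p.1) (fun J hJ => ?_) (fun p hp => ?_)
    (fun J _ => Fin.insertNth_self_removeNth _ J) (fun p _ => ?_) (fun _ _ => rfl)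
  · rw [Set.Finite.mem_toFinset, ← Fin.insertNth_self_removeNth l.castSucc J,
      insertNth_castSucc_mem_monomialTuples_iff] at hJ
    rwa [mem_sigma, Set.Finite.mem_toFinset]
  · rw [mem_sigma, Set.Finite.mem_toFinset] at hp
    rwa [Set.Finite.mem_toFinset, insertNth_castSucc_mem_monomialTuples_iff]
  · simp only [Fin.removeNth_insertNth, Fin.insertNth_apply_same]

end MonomialTuples

/-- The Stirling quasisymmetric function `M̂_{(a;b)}`, with the two rows given as tuples instead of
a list of columns, so that columns can be inserted by `Fin.insertNth`. -/
noncomputable def stirlingQsymm {k : ℕ} (a b : Fin k → ℕ) : MvPowerSeries ℕ+ ℚ :=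
  fun μ => ∑ᶠ I ∈ monomialTuples a μ, ∏ j, ((I j : ℕ) : ℚ) ^ b j

section StirlingQsymm

variable {k : ℕ} {a : Fin k → ℕ}

theorem LeftWeakTuple.coeff_stirlingQsymm (ha : LeftWeakTuple a) (b : Fin k → ℕ)
    (μ : ℕ+ →₀ ℕ) :
    MvPowerSeries.coeff μ (stirlingQsymm a b) =
      ∑ I ∈ (ha.finite_monomialTuples μ).toFinset, ∏ j, ((I j : ℕ) : ℚ) ^ b j :=
  finsum_mem_eq_finite_toFinset_sum _ _

theorem LeftWeakTuple.coeff_stirlingQsymm_insertNth_castSucc (ha : LeftWeakTuple a)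
    (b : Fin k → ℕ) (l : Fin k) (μ : ℕ+ →₀ ℕ) :
    MvPowerSeries.coeff μ (stirlingQsymm (l.castSucc.insertNth 0 a : Fin (k + 1) → ℕ)
        (l.castSucc.insertNth 0 b)) =
      ∑ I ∈ (ha.finite_monomialTuples μ).toFinset,
        #(gapBefore I l) • ∏ j, ((I j : ℕ) : ℚ) ^ b j := by
  rw [(ha.insertNth_castSucc 0 l).coeff_stirlingQsymm,
    ← ha.sum_monomialTuples_insertNth_castSucc l fun I : Fin k → ℕ+ => ∏ j, ((I j : ℕ) : ℚ) ^ b j]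
  refine sum_congr rfl fun J _ => ?_
  simp only [Fin.prod_univ_succAbove _ l.castSucc, Fin.insertNth_apply_same,
    Fin.insertNth_apply_succAbove, pow_zero, one_mul, Fin.removeNth_apply]

theorem LeftWeakTuple.stirlingQsymm_add_single (ha : LeftWeakTuple a) (b : Fin k → ℕ)
    (j : Fin k) :
    stirlingQsymm a (b + Pi.single j 1) = ∑ l ∈ Iic j, (stirlingQsymm a b +
      stirlingQsymm (l.castSucc.insertNth 0 a : Fin (k + 1) → ℕ) (l.castSucc.insertNth 0 b)) := by
  ext μ
  simp only [map_sum, map_add, ha.coeff_stirlingQsymm, ha.coeff_stirlingQsymm_insertNth_castSucc,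
    ← sum_add_distrib]
  rw [sum_comm]
  refine sum_congr rfl fun I hI => ?_
  have hmono : StrictMono I := ((ha.finite_monomialTuples μ).mem_toFinset.1 hI).1
  have hcard : (I j : ℕ) = #(Iic (I j)) := (PNat.card_Icc 1 (I j)).symm
  calc ∏ i, ((I i : ℕ) : ℚ) ^ (b + Pi.single j 1 : Fin k → ℕ) i
      = (I j : ℕ) • ∏ i, ((I i : ℕ) : ℚ) ^ b i := by
        rw [prod_pow_add_single, nsmul_eq_mul]
    _ = ∑ l ∈ Iic j, (#(gapBefore I l) + 1) • ∏ i, ((I i : ℕ) : ℚ) ^ b i := by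
        rw [hcard, card_Iic_eq_sum_card_gapBefore_add_one hmono, sum_smul]
    _ = ∑ l ∈ Iic j, (∏ i, ((I i : ℕ) : ℚ) ^ b i +
          #(gapBefore I l) • ∏ i, ((I i : ℕ) : ℚ) ^ b i) := by
        simp only [add_smul, one_smul, add_comm]

end StirlingQsymm

theorem LeftWeakTuple.stirlingQsymm_mem_span (R : Type*) [Semiring R]
    [Module R (MvPowerSeries ℕ+ ℚ)] {k : ℕ} {a : Fin k → ℕ} (ha : LeftWeakTuple a)
    (b : Fin k → ℕ) :
    stirlingQsymm a b ∈ Submodule.span R {F : MvPowerSeries ℕ+ ℚ | ∃ (k : ℕ) (a : Fin k → ℕ),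
      LeftWeakTuple a ∧ F = stirlingQsymm a 0} := by
  induction hn : ∑ j, b j generalizing k with
  | zero =>
    obtain rfl : b = 0 := funext <| by simpa using hn
    exact Submodule.subset_span ⟨k, a, ha, rfl⟩
  | succ n ih =>
    obtain ⟨j, -, hj⟩ : ∃ j ∈ univ, b j ≠ 0 := exists_ne_zero_of_sum_ne_zero (by omega)
    obtain ⟨b, rfl⟩ : ∃ b' : Fin k → ℕ, b = b' + Pi.single j 1 :=
      ⟨b - Pi.single j 1, (tsub_add_cancel_of_le <| update_le_iff.2
        ⟨Nat.one_le_iff_ne_zero.2 hj, fun _ _ => Nat.zero_le _⟩).symm⟩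
    have hsum : ∑ i, b i = n := by
      simpa [sum_add_distrib] using hn
    rw [ha.stirlingQsymm_add_single]
    refine Submodule.sum_mem _ fun l _ => Submodule.add_mem _ (ih ha b hsum) ?_
    refine ih (ha.insertNth_castSucc 0 l) _ ?_
    rw [Fin.sum_insertNth, zero_add, hsum]

section Lists

variable {α : Type*}

theorem exists_list_get_iff {P : ∀ k, (Fin k → α) → Prop} :
    (∃ l : List α, P l.length l.get) ↔ ∃ k f, P k f :=
  (List.equivSigmaTuple.surjective.exists (p := fun s => P s.1 s.2)).symm.trans Sigma.exists

theorem leftWeakTuple_get_iff {f : α → ℕ} {l : List α} :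
    LeftWeakTuple (fun i => f (l.get i)) ↔ ∀ x, l.getLast? = some x → 0 < f x := by
  constructor
  · rintro h x hx
    rw [List.getLast?_eq_getElem?, List.getElem?_eq_some_iff] at hx
    obtain ⟨hlt, rfl⟩ := hx
    obtain ⟨j, hij, hj⟩ := h ⟨_, hlt⟩
    rwa [show j = ⟨_, hlt⟩ from le_antisymm (Nat.le_sub_one_of_lt j.2) hij] at hj
  · intro h i
    have hlt : l.length - 1 < l.length := Nat.sub_one_lt_of_lt i.2
    refine ⟨⟨_, hlt⟩, Nat.le_sub_one_of_lt i.2, h _ ?_⟩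
    rw [List.getLast?_eq_getElem?, List.get_eq_getElem, List.getElem?_eq_getElem hlt]

end Lists

theorem Mqs_eq_stirlingQsymm {α : List ℕ} (hα : LeftWeakTuple α.get) :
    Mqs α = stirlingQsymm α.get 0 := by
  ext μ
  rw [hα.coeff_stirlingQsymm]
  simp only [Pi.zero_apply, pow_zero, prod_const_one, sum_const, nsmul_one]
  exact congrArg Nat.cast (Set.ncard_eq_toFinset_card _ _)

theorem setOf_Mqs_eq : {F | ∃ α : List ℕ, LeftWeak α ∧ F = Mqs α} =
    {F | ∃ (k : ℕ) (a : Fin k → ℕ), LeftWeakTuple a ∧ F = stirlingQsymm a 0} := by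
  ext F
  refine Iff.trans ?_
    (exists_list_get_iff (P := fun _ a => LeftWeakTuple a ∧ F = stirlingQsymm a 0))
  refine exists_congr fun α => ?_
  have hα : LeftWeakTuple α.get ↔ LeftWeak α := leftWeakTuple_get_iff (f := id)
  rw [← hα]
  exact and_congr_right fun hα => by rw [Mqs_eq_stirlingQsymm hα]

theorem setOf_stirM_eq : {F | ∃ c : List (ℕ × ℕ), UpperLeftWeak c ∧ F = stirM c} =
    {F | ∃ (k : ℕ) (a b : Fin k → ℕ), LeftWeakTuple a ∧ F = stirlingQsymm a b} := by
  ext F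
  have hcols : (∃ c : List (ℕ × ℕ), UpperLeftWeak c ∧ F = stirM c) ↔
      ∃ (k : ℕ) (c : Fin k → ℕ × ℕ), LeftWeakTuple (fun j => (c j).1) ∧
        F = stirlingQsymm (fun j => (c j).1) (fun j => (c j).2) :=
    (exists_congr fun _ => and_congr_left' leftWeakTuple_get_iff.symm).trans
      (exists_list_get_iff (P := fun _ (c : _ → ℕ × ℕ) => LeftWeakTuple (fun j => (c j).1) ∧
        F = stirlingQsymm (fun j => (c j).1) (fun j => (c j).2)))
  refine hcols.trans (exists_congr fun k => ⟨?_, ?_⟩)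
  · rintro ⟨c, hc, rfl⟩
    exact ⟨_, _, hc, rfl⟩
  · rintro ⟨a, b, ha, rfl⟩
    exact ⟨fun j => (a j, b j), ha, rfl⟩

theorem stmt16_general (R : Type*) [Semiring R] [Module R (MvPowerSeries ℕ+ ℚ)] :
    Submodule.span R
        {F : MvPowerSeries ℕ+ ℚ | ∃ c : List (ℕ × ℕ), UpperLeftWeak c ∧ F = stirM c} =
    Submodule.span R
        {F : MvPowerSeries ℕ+ ℚ | ∃ α : List ℕ, LeftWeak α ∧ F = Mqs α} := by
  rw [setOf_Mqs_eq, setOf_stirM_eq]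
  apply le_antisymm
  · rw [Submodule.span_le]
    rintro _ ⟨k, a, b, ha, rfl⟩
    exact ha.stirlingQsymm_mem_span R b
  · refine Submodule.span_mono ?_
    rintro _ ⟨k, a, ha, rfl⟩
    exact ⟨k, a, 0, ha, rfl⟩

/-- The ℚ-linear span in ℚ[[X]] of the Stirling left weak quasisymmetric
functions M̂_{(α;β)}, over all upper-left weak bicompositions (α;β), equals the ℚ-linear
span of the monomial left weak quasisymmetric functions M_α, over all left weak
compositions α. -/
theorem stmt16 :
    Submodule.span ℚ
        {F : MvPowerSeries ℕ+ ℚ | ∃ c : List (ℕ × ℕ), UpperLeftWeak c ∧ F = stirM c} =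
    Submodule.span ℚ
        {F : MvPowerSeries ℕ+ ℚ | ∃ α : List ℕ, LeftWeak α ∧ F = Mqs α} :=
  stmt16_general ℚ
end
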